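/- For every integer r ≥ 1, every σ ∈ M_{r,∞}, every τ ∈ Aut(T_∞), and every word x, one has P_r(σ∘τ, x) = P_r(σ) · P_r(τ, x) in ℤ₂. -/

import Mathlib

/-- Nodes of the infinite binary rooted tree `T_∞` are finite words over `{a,b}`,
encoded as `List Bool` with `a = false` and `b = true`; children of `w` are
`w ++ [false]` and `w ++ [true]`. An automorphism of `T_∞`. -/
def IsTreeAut (σ : List Bool → List Bool) : Prop :=
  Function.Bijective σ ∧ (∀ w, (σ w).length = w.length) ∧
    ∀ w s, ∃ t, σ (w ++ [s]) = σ w ++ [t]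

/-- The parity `Par(σ,x) ∈ {0,1}`: `0` if `σ(xa) = σ(x)a`, and `1` otherwise. -/
def par (σ : List Bool → List Bool) (x : List Bool) : ℕ :=
  if σ (x ++ [false]) = σ x ++ [false] then 0 else 1

/-- `W(r,i)`: the words `s₁ ⋯ s_{ri−1}` of length `r*i − 1` over `{a,b}` with
`s_j = a` whenever `r ∣ j`. -/
noncomputable def Wset (r i : ℕ) : Finset (List Bool) :=
  ((Finset.univ : Finset (Fin (r*i-1) → Bool)).filter
    (fun s => ∀ j : Fin (r*i-1), r ∣ (j:ℕ)+1 → s j = false)).image List.ofFn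

/-- `Q_r(σ,x) := Σ_{i≥1} 2^i Σ_{w ∈ W(r,i)} Par(σ, xw)` in `ℤ₂`. -/
noncomputable def Qr (r : ℕ) (σ : List Bool → List Bool) (x : List Bool) : ℤ_[2] :=
  ∑' i : ℕ, (2:ℤ_[2])^(i+1) * ∑ w ∈ Wset r (i+1), (par σ (x ++ w) : ℤ_[2])

/-- `P_r(σ,x) := (−1)^{Par(σ,x)} + Q_r(σ,xb) − Q_r(σ,xa)` in `ℤ₂`. -/
noncomputable def Pr (r : ℕ) (σ : List Bool → List Bool) (x : List Bool) : ℤ_[2] :=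
  (-1:ℤ_[2])^(par σ x) + Qr r σ (x ++ [true]) - Qr r σ (x ++ [false])

/-- `M_{r,∞}`: tree automorphisms for which `P_r(σ,·)` is constant. -/
def Mset (r : ℕ) : Set (List Bool → List Bool) :=
  {σ | IsTreeAut σ ∧ ∀ x₁ x₂ : List Bool, Pr r σ x₁ = Pr r σ x₂}

/-- `B_{r,∞}`: elements of `M_{r,∞}` with common value `P_r(σ) = 1`. -/
def Bset (r : ℕ) : Set (List Bool → List Bool) :=
  {σ | σ ∈ Mset r ∧ Pr r σ [] = 1}

theorem mem_Wset' (r i : ℕ) (w : List Bool) :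
    w ∈ Wset r i ↔ w.length = r*i-1 ∧ ∀ j (h : j < w.length), r ∣ j+1 → w[j] = false := by
  unfold Wset
  simp only [Finset.mem_image, Finset.mem_filter, Finset.mem_univ, true_and]
  constructor
  · rintro ⟨s, hs, rfl⟩
    refine ⟨by simp, ?_⟩
    intro j h hd
    simp only [List.getElem_ofFn]
    exact hs _ hd
  · rintro ⟨hl, h⟩
    refine ⟨fun j => w[(j:ℕ)]'(by rw [hl]; exact j.2), ?_, ?_⟩
    · intro j hd
      exact h _ _ hd
    · apply List.ext_getElem
      · simp [hl]
      · intro n h1 h2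
        simp

theorem mem_Wset_one (r : ℕ) (w : List Bool) :
    w ∈ Wset r 1 ↔ w.length = r-1 := by
  rw [mem_Wset', mul_one]
  constructor
  · exact fun h => h.1
  · intro h
    refine ⟨h, fun j hj hd => ?_⟩
    have := Nat.le_of_dvd (by omega) hd
    omega

theorem Wset_sum_succ (r : ℕ) (hr : 1 ≤ r) (i : ℕ) (f : List Bool → ℤ_[2]) :
    ∑ w ∈ Wset r (i+2), f w
      = ∑ u ∈ Wset r 1, ∑ w ∈ Wset r (i+1), f (u ++ ([false] ++ w)) := by
  rw [← Finset.sum_product']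
  symm
  have e : r * (i+2) = r * (i+1) + r := by ring
  have e' : 1 ≤ r * (i+1) := Nat.mul_pos hr (by omega)
  apply Finset.sum_bij' (fun p _ => p.1 ++ ([false] ++ p.2))
    (fun w _ => (w.take (r-1), w.drop r))
  · rintro ⟨u, w⟩ h
    rw [Finset.mem_product, mem_Wset_one, mem_Wset'] at h
    obtain ⟨h1, h2, h3⟩ := h
    dsimp only at h1 h2 h3 ⊢
    rw [mem_Wset']
    refine ⟨by simp; omega, ?_⟩
    intro j hj hd
    rw [List.getElem_append]
    split_ifs with hlt
    · have := Nat.le_of_dvd (by omega) hd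
      omega
    · rw [List.getElem_append]
      split_ifs with hlt2
      · simp
      · apply h3
        simp only [List.length_singleton]
        have : j + 1 = (j - u.length - 1 + 1) + r := by
          simp at hlt2; omega
        rw [this] at hd
        exact (Nat.dvd_add_left (dvd_refl r)).1 hd
  · intro w h
    rw [mem_Wset'] at h
    obtain ⟨h2, h3⟩ := h
    rw [Finset.mem_product, mem_Wset_one, mem_Wset']
    refine ⟨by simp; omega, by simp; omega, ?_⟩
    intro j hj hd
    rw [List.getElem_drop]
    apply h3
    rw [add_assoc]
    exact (Nat.dvd_add_right (dvd_refl r)).2 hd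
  · rintro ⟨u, w⟩ h
    rw [Finset.mem_product, mem_Wset_one] at h
    obtain ⟨h1, -⟩ := h
    dsimp only at h1 ⊢
    have h4 : r = u.length + 1 := by omega
    subst h4
    simp [List.drop_append]
  · intro w h
    rw [mem_Wset'] at h
    obtain ⟨h2, h3⟩ := h
    have hlt : r - 1 < w.length := by omega
    have := h3 (r-1) hlt (by rw [Nat.sub_add_cancel hr])
    have h5 : w.drop (r-1) = [false] ++ w.drop r := by
      rw [List.drop_eq_getElem_cons hlt, this, Nat.sub_add_cancel hr]; rfl
    dsimp only
    rw [← h5, List.take_append_drop]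
  · intro p _
    rfl

theorem Qr_summable (r : ℕ) (σ : List Bool → List Bool) (x : List Bool) :
    Summable (fun i : ℕ =>
      (2:ℤ_[2])^(i+1) * ∑ w ∈ Wset r (i+1), (par σ (x ++ w) : ℤ_[2])) := by
  apply Summable.of_norm_bounded (g := fun i : ℕ => (1/2:ℝ)^i) summable_geometric_two
  intro i
  rw [norm_mul, norm_pow]
  have h2 : ‖(2:ℤ_[2])‖ = 1/2 := by
    have := PadicInt.norm_p (p := 2)
    norm_num at this ⊢
    exact this
  rw [h2]
  calc (1/2:ℝ)^(i+1) * _ ≤ (1/2:ℝ)^(i+1) * 1 := by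
        gcongr
        exact PadicInt.norm_le_one _
    _ ≤ (1/2:ℝ)^i := by
        rw [mul_one]
        exact pow_le_pow_of_le_one (by norm_num) (by norm_num) (by omega)

theorem Qr_rec (r : ℕ) (hr : 1 ≤ r) (σ : List Bool → List Bool) (x : List Bool) :
    Qr r σ x = 2 * ∑ u ∈ Wset r 1,
      ((par σ (x ++ u) : ℤ_[2]) + Qr r σ ((x ++ u) ++ [false])) := by
  conv_lhs => rw [Qr, (Qr_summable r σ x).tsum_eq_zero_add]
  rw [Finset.sum_add_distrib, mul_add]
  refine congrArg₂ (· + ·) ?_ ?_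
  · simp
  · simp only [Qr]
    rw [← Summable.tsum_finsetSum (fun u _ => Qr_summable r σ _),
      ← Summable.tsum_mul_left _ (summable_sum fun u _ => Qr_summable r σ _)]
    congr 1
    ext1 i
    rw [Wset_sum_succ r hr, ← Finset.mul_sum]
    simp only [List.append_assoc]
    ring

theorem aut_append {τ : List Bool → List Bool} (hτ : IsTreeAut τ) (x u : List Bool) :
    τ (x ++ u) = τ x ++ (τ (x ++ u)).drop x.length := by
  induction u using List.reverseRecOn with
  | nil =>
    have : (τ x).length ≤ x.length := (hτ.2.1 x).le
    simp [List.drop_eq_nil_of_le this]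
  | append_singleton u s ih =>
    obtain ⟨t, ht⟩ := hτ.2.2 (x ++ u) s
    rw [← List.append_assoc, ht, List.drop_append_of_le_length, ← List.append_assoc, ← ih]
    rw [hτ.2.1]; simp

theorem sum_aut (r : ℕ) {τ : List Bool → List Bool} (hτ : IsTreeAut τ) (x : List Bool)
    (F : List Bool → ℤ_[2]) :
    ∑ u ∈ Wset r 1, F (τ (x ++ u)) = ∑ u ∈ Wset r 1, F (τ x ++ u) := by
  have hm : Set.MapsTo (fun u => (τ (x ++ u)).drop x.length)
      (Wset r 1 : Set (List Bool)) (Wset r 1 : Set (List Bool)) := by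
    intro u hu
    rw [Finset.mem_coe, mem_Wset_one] at hu ⊢
    simp [hτ.2.1, hu]
  have hi : Set.InjOn (fun u => (τ (x ++ u)).drop x.length) (Wset r 1 : Set (List Bool)) := by
    intro u _ v _ h
    dsimp only at h
    have : τ (x ++ u) = τ (x ++ v) := by
      rw [aut_append hτ x u, h, ← aut_append hτ x v]
    exact List.append_cancel_left (hτ.1.1 this)
  refine Finset.sum_nbij (fun u => (τ (x ++ u)).drop x.length) hm hi
    (Finset.surjOn_of_injOn_of_card_le _ hm hi le_rfl) ?_
  intro u _
  rw [← aut_append hτ x u]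

/-- The two possibilities for the action of an automorphism at a node. -/
theorem aut_cases {τ : List Bool → List Bool} (hτ : IsTreeAut τ) (x : List Bool) :
    (par τ x = 0 ∧ τ (x ++ [false]) = τ x ++ [false] ∧ τ (x ++ [true]) = τ x ++ [true]) ∨
    (par τ x = 1 ∧ τ (x ++ [false]) = τ x ++ [true] ∧ τ (x ++ [true]) = τ x ++ [false]) := by
  obtain ⟨s, hs⟩ := hτ.2.2 x false
  obtain ⟨t, ht⟩ := hτ.2.2 x true
  have hne : s ≠ t := by
    rintro rfl
    have := hτ.1.1 (hs.trans ht.symm)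
    simp at this
  unfold par
  rw [hs, ht]
  cases s <;> cases t <;> simp_all

theorem par_comp {σ τ : List Bool → List Bool} (hσ : IsTreeAut σ) (hτ : IsTreeAut τ)
    (x : List Bool) :
    (par (σ ∘ τ) x : ℤ_[2]) = par τ x + par σ (τ x) - 2 * par τ x * par σ (τ x) := by
  have hc : par (σ ∘ τ) x = if σ (τ (x ++ [false])) = σ (τ x) ++ [false] then 0 else 1 := rfl
  rw [hc]
  rcases aut_cases hτ x with ⟨h1, h2, h3⟩ | ⟨h1, h2, h3⟩ <;>
  rcases aut_cases hσ (τ x) with ⟨k1, k2, k3⟩ | ⟨k1, k2, k3⟩ <;>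
  simp [h1, h2, k1, k2, k3] <;> norm_num

theorem neg_one_pow_par (σ : List Bool → List Bool) (x : List Bool) :
    (-1:ℤ_[2])^(par σ x) = 1 - 2 * par σ x := by
  unfold par
  split_ifs <;> norm_num

theorem Q_false {r : ℕ} {σ τ : List Bool → List Bool} (hσ : σ ∈ Mset r) (hτ : IsTreeAut τ)
    (y : List Bool) :
    Qr r σ (τ (y ++ [false])) = Qr r σ (τ y ++ [false])
      + par τ y * (Pr r σ [] - 1 + 2 * par σ (τ y)) := by
  have h := hσ.2 [] (τ y)
  rw [h, Pr, neg_one_pow_par]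
  rcases aut_cases hτ y with ⟨h1, h2, h3⟩ | ⟨h1, h2, h3⟩
  · rw [h1, h2]; simp
  · rw [h1, h2]; push_cast; ring

theorem Q_true {r : ℕ} {σ τ : List Bool → List Bool} (hσ : σ ∈ Mset r) (hτ : IsTreeAut τ)
    (y : List Bool) :
    Qr r σ (τ (y ++ [true])) = Qr r σ (τ y ++ [false])
      + (1 - par τ y) * (Pr r σ [] - 1 + 2 * par σ (τ y)) := by
  have h := hσ.2 [] (τ y)
  rw [h, Pr, neg_one_pow_par]
  rcases aut_cases hτ y with ⟨h1, h2, h3⟩ | ⟨h1, h2, h3⟩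
  · rw [h1, h3]; push_cast; ring
  · rw [h1, h3]; simp

theorem Q_comp_dvd {r : ℕ} (hr : 1 ≤ r) {σ τ : List Bool → List Bool} (hσ : σ ∈ Mset r)
    (hτ : IsTreeAut τ) (n : ℕ) : ∀ x, (2:ℤ_[2])^n ∣
      Qr r (σ ∘ τ) x - (Pr r σ [] * Qr r τ x + Qr r σ (τ x)) := by
  induction n with
  | zero => intro x; simp
  | succ n ih =>
    intro x
    have key : Qr r (σ ∘ τ) x - (Pr r σ [] * Qr r τ x + Qr r σ (τ x)) =
        2 * ∑ u ∈ Wset r 1, (Qr r (σ ∘ τ) (x ++ u ++ [false])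
          - (Pr r σ [] * Qr r τ (x ++ u ++ [false]) + Qr r σ (τ (x ++ u ++ [false])))) := by
      rw [Qr_rec r hr (σ ∘ τ) x, Qr_rec r hr τ x, Qr_rec r hr σ (τ x),
        ← sum_aut r hτ x (fun z => (par σ z : ℤ_[2]) + Qr r σ (z ++ [false])),
        mul_left_comm, ← mul_add, ← mul_sub, Finset.mul_sum, ← Finset.sum_add_distrib,
        ← Finset.sum_sub_distrib]
      congr 1
      apply Finset.sum_congr rfl
      intro u _
      rw [Q_false hσ hτ, par_comp hσ.1 hτ]
      ring
    rw [key, pow_succ']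
    exact mul_dvd_mul_left 2 (Finset.dvd_sum fun u _ => ih _)

theorem Q_comp {r : ℕ} (hr : 1 ≤ r) {σ τ : List Bool → List Bool} (hσ : σ ∈ Mset r)
    (hτ : IsTreeAut τ) (x : List Bool) :
    Qr r (σ ∘ τ) x = Pr r σ [] * Qr r τ x + Qr r σ (τ x) := by
  rw [← sub_eq_zero]
  by_contra hne
  have h2 : ¬ IsUnit (2:ℤ_[2]) := by
    have := PadicInt.prime_p (p := 2)
    exact_mod_cast this.not_isUnit
  obtain ⟨n, hn⟩ := FiniteMultiplicity.of_not_isUnit h2 hne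
  exact hn (Q_comp_dvd hr hσ hτ (n+1) x)

/-- For every integer `r ≥ 1`, every `σ ∈ M_{r,∞}`, every
`τ ∈ Aut(T_∞)`, and every word `x`, one has `P_r(σ∘τ, x) = P_r(σ) · P_r(τ, x)` in `ℤ₂`
(the common value `P_r(σ)` being realized as `Pr r σ []`). -/
theorem Pr_comp (r : ℕ) (hr : 1 ≤ r) (σ τ : List Bool → List Bool)
    (hσ : σ ∈ Mset r) (hτ : IsTreeAut τ) (x : List Bool) :
    Pr r (σ ∘ τ) x = Pr r σ [] * Pr r τ x := by
  have hp : (-1:ℤ_[2])^(par (σ ∘ τ) x) = 1 - 2 * par (σ ∘ τ) x := neg_one_pow_par _ _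
  rw [Pr, hp, par_comp hσ.1 hτ, Q_comp hr hσ hτ, Q_comp hr hσ hτ, Q_false hσ hτ, Q_true hσ hτ]
  conv_rhs => rw [Pr.eq_1 r τ x, neg_one_pow_par]
  ring
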